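/- Let X ⊆ ℝⁿ be a nonempty compact convex set and f : ℝⁿ → ℝ twice continuously differentiable with μ·I ⪯ ∇²f(x) ⪯ L·I for all x ∈ X (0 < μ ≤ L) and with L₂-Lipschitz Hessian on X, with unique minimizer x* over X. Fix x_k ∈ X with x_k ≠ x*, a symmetric positive definite H_k, set η_k := max{λ_max(H_k⁻¹∇²f(x_k)), λ_max((∇²f(x_k))⁻¹H_k)}, and assume η_k − 1 ≤ ω·‖x_k − x*‖² for a constant ω ≥ 0. Let f̂_k(x) := f(x_k) + ⟨∇f(x_k), x − x_k⟩ + ½‖x − x_k‖²_{H_k} with minimizer x̃*_{k+1} over X, let lb satisfy 0 ≤ lb ≤ f(x_k) − f(x*), and let x̃_{k+1} ∈ X satisfy f̂_k(x̃_{k+1}) − f̂_k(x̃*_{k+1}) ≤ ( lb/‖∇f(x_k)‖ )⁴. Then ‖x̃_{k+1} − x*‖ ≤ (√η_k/(2μ)) · ( √(8μ)·(1 + √(Lω)) + √η_k·L₂ ) · ‖x_k − x*‖². -/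

import Mathlib

/-!
Write `p = xk - xstar`, `G = Hess xk`, `H = Hk`, `η = ηk`, `v = xt - xstar`.

By Rayleigh quotients (`qForm_le_lamMax`), the definition of `η` gives `G ⪯ ηH` and `H ⪯ ηG`, so
`μ‖w‖² ≤ η‖w‖²_H` for every `w`. The error splits as `‖xtil - xstar‖ ≤ ‖xtil - xt‖ + ‖v‖`.

* First-order optimality of `xt` for the quadratic model gives `‖xtil - xt‖²_H ≤ 2ε`, where `ε`
  is the accuracy `(lb / ‖∇f(xk)‖)⁴`. Convexity of `f` gives
  `lb ≤ f xk - f xstar ≤ ‖∇f(xk)‖‖p‖`, hence `ε ≤ ‖p‖⁴`.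
* Adding the first-order conditions of `xt` (for the model) and of `xstar` (for `f`) gives
  `‖v‖²_H ≤ ⟪v, (H - G)p⟫ + ⟪r, v⟫`, where `r = ∇f(xstar) - ∇f(xk) - G(xstar - xk)` is the Taylor
  remainder, with `‖r‖ ≤ (L₂/2)‖p‖²`. The mixed estimate
  `η⟪v, (H - G)p⟫² ≤ (η - 1)²‖p‖²_G‖v‖²_H` (`inner_diff_sq_le`) together with `‖p‖²_G ≤ L‖p‖²` and
  `(η - 1)²/η ≤ η - 1 ≤ ω‖p‖²` bounds the first term by `√(Lω)‖p‖²‖v‖_H`. Measuring one argument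
  in the `G`-norm and the other in the `H`-norm produces the factor `(η - 1)/√η`; using the same
  norm twice would lose a power of `η`.

Dividing by `‖v‖_H` and converting back to the Euclidean norm yields the claim, with room to spare
in the `√(Lω)` term (a factor `√2`).
-/


open Matrix
open scoped RealInnerProductSpace

/-- The largest (real) eigenvalue of a matrix, as the supremum of its real spectrum. -/
noncomputable def lamMax {n : ℕ} (M : Matrix (Fin n) (Fin n) ℝ) : ℝ :=
  sSup (spectrum ℝ M)

/-- The smallest (real) eigenvalue of a matrix, as the infimum of its real spectrum. -/
noncomputable def lamMin {n : ℕ} (M : Matrix (Fin n) (Fin n) ℝ) : ℝ :=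
  sInf (spectrum ℝ M)

/-- Action of a matrix on a vector of Euclidean space. -/
noncomputable def mApply {n : ℕ} (H : Matrix (Fin n) (Fin n) ℝ)
    (v : EuclideanSpace ℝ (Fin n)) : EuclideanSpace ℝ (Fin n) :=
  Matrix.toEuclideanCLM (𝕜 := ℝ) H v

/-- The squared matrix "norm" ‖v‖²_H := vᵀ H v. -/
noncomputable def qForm {n : ℕ} (H : Matrix (Fin n) (Fin n) ℝ)
    (v : EuclideanSpace ℝ (Fin n)) : ℝ :=
  ⟪v, mApply H v⟫

/-- Spectral (ℓ² operator) norm of a matrix. -/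
noncomputable def mNorm {n : ℕ} (H : Matrix (Fin n) (Fin n) ℝ) : ℝ :=
  ‖Matrix.toEuclideanCLM (𝕜 := ℝ) H‖

/-! ### Quadratic forms of matrices -/

theorem inner_comm_of_isHermitian {n : ℕ} {A : Matrix (Fin n) (Fin n) ℝ} (hA : A.IsHermitian)
    (u v : EuclideanSpace ℝ (Fin n)) : ⟪u, mApply A v⟫ = ⟪v, mApply A u⟫ := by
  have h : IsSelfAdjoint (Matrix.toEuclideanCLM (𝕜 := ℝ) A) := by
    rw [isSelfAdjoint_iff, ← map_star, Matrix.star_eq_conjTranspose, hA.eq]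
  rw [real_inner_comm]
  exact h.isSymmetric v u

theorem qForm_eq {n : ℕ} (A : Matrix (Fin n) (Fin n) ℝ) (v : EuclideanSpace ℝ (Fin n)) :
    qForm A v = star v.ofLp ⬝ᵥ (A *ᵥ v.ofLp) := by
  rw [star_trivial]
  exact Matrix.inner_toEuclideanCLM A v v

theorem qForm_nonneg {n : ℕ} {A : Matrix (Fin n) (Fin n) ℝ} (hA : A.PosSemidef)
    (v : EuclideanSpace ℝ (Fin n)) : 0 ≤ qForm A v := by
  rw [qForm_eq]; exact hA.dotProduct_mulVec_nonneg _

theorem qForm_pos {n : ℕ} {A : Matrix (Fin n) (Fin n) ℝ} (hA : A.PosDef)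
    {v : EuclideanSpace ℝ (Fin n)} (hv : v ≠ 0) : 0 < qForm A v := by
  rw [qForm_eq]; exact hA.dotProduct_mulVec_pos (by simpa using hv)

theorem mApply_sub {n : ℕ} (A B : Matrix (Fin n) (Fin n) ℝ) (v : EuclideanSpace ℝ (Fin n)) :
    mApply (A - B) v = mApply A v - mApply B v := by
  simp [mApply, map_sub]

theorem mApply_smul {n : ℕ} (c : ℝ) (A : Matrix (Fin n) (Fin n) ℝ)
    (v : EuclideanSpace ℝ (Fin n)) : mApply (c • A) v = c • mApply A v := by
  simp [mApply, map_smul]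

theorem mApply_one {n : ℕ} (v : EuclideanSpace ℝ (Fin n)) :
    mApply (1 : Matrix (Fin n) (Fin n) ℝ) v = v := by
  simp [mApply]

theorem continuous_qForm {n : ℕ} (A : Matrix (Fin n) (Fin n) ℝ) : Continuous (qForm A) := by
  unfold qForm mApply; fun_prop

theorem qForm_smul_vec {n : ℕ} (A : Matrix (Fin n) (Fin n) ℝ) (c : ℝ)
    (v : EuclideanSpace ℝ (Fin n)) : qForm A (c • v) = c ^ 2 * qForm A v := by
  simp only [qForm, mApply, map_smul, inner_smul_left, inner_smul_right, conj_trivial]; ring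

/-- The generalized Rayleigh quotient bound `G ⪯ λ_max(A⁻¹G) A`. The quotient `qForm G / qForm A`
attains its maximum `m` on the unit sphere; `m A - G` is then positive semidefinite with a
nontrivial kernel, so `m` is an eigenvalue of `A⁻¹ G`. -/
theorem qForm_le_lamMax {n : ℕ} {A G : Matrix (Fin n) (Fin n) ℝ} (hA : A.PosDef)
    (hG : G.IsHermitian) (v : EuclideanSpace ℝ (Fin n)) :
    qForm G v ≤ lamMax (A⁻¹ * G) * qForm A v := by
  by_cases hv : v = 0
  · simp [hv, qForm]
  have hvn : ‖v‖ ≠ 0 := by simpa using hv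
  have hne : (Metric.sphere (0 : EuclideanSpace ℝ (Fin n)) 1).Nonempty :=
    ⟨‖v‖⁻¹ • v, by simp [norm_smul, hvn]⟩
  have hsph : ∀ w ∈ Metric.sphere (0 : EuclideanSpace ℝ (Fin n)) 1, w ≠ 0 := by
    rintro w hw rfl
    simp at hw
  obtain ⟨w₀, hw₀, hmax⟩ := (isCompact_sphere (0 : EuclideanSpace ℝ (Fin n)) 1).exists_isMaxOn hne
    (f := fun w => qForm G w / qForm A w)
    ((continuous_qForm G).continuousOn.div (continuous_qForm A).continuousOn
      (fun w hw => (qForm_pos hA (hsph w hw)).ne'))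
  set m := qForm G w₀ / qForm A w₀ with hm
  have hw₀' := hsph w₀ hw₀
  have hle : ∀ w, qForm G w ≤ m * qForm A w := by
    intro w
    by_cases hw : w = 0
    · simp [hw, qForm]
    have hwn : ‖w‖ ≠ 0 := by simpa using hw
    have h := hmax (show ‖w‖⁻¹ • w ∈ Metric.sphere (0 : EuclideanSpace ℝ (Fin n)) 1 by
      simp [norm_smul, hwn])
    simp only [Set.mem_ofPred_eq, qForm_smul_vec] at h
    rw [mul_div_mul_left _ _ (by positivity), ← hm, div_le_iff₀ (qForm_pos hA hw)] at h
    exact h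
  have hpsd : (m • A - G).PosSemidef := by
    refine Matrix.PosSemidef.of_dotProduct_mulVec_nonneg
      ((hA.isHermitian.smul (by simp [IsSelfAdjoint])).sub hG) (fun x => ?_)
    have h := hle (WithLp.toLp 2 x)
    rw [← WithLp.ofLp_toLp 2 x, ← qForm_eq, qForm, mApply_sub, mApply_smul, inner_sub_right,
      inner_smul_right]
    exact sub_nonneg.2 h
  have hzero : (m • A - G) *ᵥ w₀.ofLp = 0 := by
    rw [← hpsd.dotProduct_mulVec_zero_iff, ← qForm_eq, qForm, mApply_sub, mApply_smul,
      inner_sub_right, inner_smul_right]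
    change m * qForm A w₀ - qForm G w₀ = 0
    rw [hm, div_mul_cancel₀ _ (qForm_pos hA hw₀').ne', sub_self]
  have hAu : IsUnit A.det := (Matrix.isUnit_iff_isUnit_det A).1 hA.isUnit
  have hspec : m ∈ spectrum ℝ (A⁻¹ * G) := by
    rw [spectrum.mem_iff, Matrix.isUnit_iff_isUnit_det, isUnit_iff_ne_zero, not_not,
      ← Matrix.exists_mulVec_eq_zero_iff]
    refine ⟨w₀.ofLp, by simpa using hw₀', ?_⟩
    have : algebraMap ℝ (Matrix (Fin n) (Fin n) ℝ) m - A⁻¹ * G = A⁻¹ * (m • A - G) := by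
      rw [Matrix.mul_sub, Matrix.mul_smul, Matrix.nonsing_inv_mul _ hAu,
        Algebra.algebraMap_eq_smul_one]
    rw [this, ← Matrix.mulVec_mulVec, hzero, Matrix.mulVec_zero]
  refine (hle v).trans ?_
  exact mul_le_mul_of_nonneg_right (le_csSup (Matrix.finite_spectrum _).bddAbove hspec)
    (qForm_nonneg hA.posSemidef v)

/-- Cauchy–Schwarz for a positive semidefinite form. -/
theorem inner_mApply_sq_le {n : ℕ} {A : Matrix (Fin n) (Fin n) ℝ} (hA : A.IsHermitian)
    (hnn : ∀ w, 0 ≤ qForm A w) (u v : EuclideanSpace ℝ (Fin n)) :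
    ⟪u, mApply A v⟫ ^ 2 ≤ qForm A u * qForm A v := by
  have h : ∀ t : ℝ, 0 ≤ qForm A v * (t * t) + 2 * ⟪u, mApply A v⟫ * t + qForm A u := by
    intro t
    have h1 := hnn (u + t • v)
    have h2 := inner_comm_of_isHermitian hA u v
    simp only [qForm, mApply, map_add, map_smul, inner_add_left, inner_add_right,
      inner_smul_left, inner_smul_right, conj_trivial] at h1 h2 ⊢
    rw [← h2] at h1
    linarith
  have := discrim_le_zero h
  rw [discrim] at this
  nlinarith

/-- If `G ⪯ ηH` and `H ⪯ ηG`, then `H - G` is small as a bilinear form, measured in the norm of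
`G` in one slot and of `H` in the other. With `A = ηH - G` and `B = ηG - H`, both positive
semidefinite, `A - B = (η + 1)(H - G)`, `A + ηB = (η² - 1)G` and `ηA + B = (η² - 1)H`, so the
claim follows from Cauchy–Schwarz for `A` and for `B`. -/
theorem inner_diff_sq_le {n : ℕ} {G H : Matrix (Fin n) (Fin n) ℝ} (hG : G.IsHermitian)
    (hH : H.IsHermitian) {η : ℝ} (hη : 0 < η) (h1 : ∀ w, qForm G w ≤ η * qForm H w)
    (h2 : ∀ w, qForm H w ≤ η * qForm G w) (u v : EuclideanSpace ℝ (Fin n)) :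
    η * (⟪u, mApply H v⟫ - ⟪u, mApply G v⟫) ^ 2 ≤ (η - 1) ^ 2 * (qForm G u * qForm H v) := by
  have hq : ∀ (P Q : Matrix (Fin n) (Fin n) ℝ) w,
      qForm (η • P - Q) w = η * qForm P w - qForm Q w := by
    intro P Q w
    simp only [qForm, mApply_sub, mApply_smul, inner_sub_right, inner_smul_right]
  have hsm : IsSelfAdjoint η := by simp [IsSelfAdjoint]
  have hA := inner_mApply_sq_le ((hH.smul hsm).sub hG)
    (fun w => by rw [hq]; linarith [h1 w]) u v
  have hB := inner_mApply_sq_le ((hG.smul hsm).sub hH)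
    (fun w => by rw [hq]; linarith [h2 w]) u v
  simp only [hq, mApply_sub, mApply_smul, inner_sub_right, inner_smul_right] at hA hB
  have a1 := sub_nonneg.2 (h1 u)
  have a2 := sub_nonneg.2 (h1 v)
  have b1 := sub_nonneg.2 (h2 u)
  have b2 := sub_nonneg.2 (h2 v)
  set x := ⟪u, mApply H v⟫
  set y := ⟪u, mApply G v⟫
  set Au := η * qForm H u - qForm G u with hAu
  set Av := η * qForm H v - qForm G v with hAv
  set Bu := η * qForm G u - qForm H u with hBu
  set Bv := η * qForm G v - qForm H v with hBv
  have eu : (η ^ 2 - 1) * qForm G u = Au + η * Bu := by rw [hAu, hBu]; ring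
  have ev : (η ^ 2 - 1) * qForm H v = η * Av + Bv := by rw [hAv, hBv]; ring
  set α := η * x - y with hα
  set β := η * y - x with hβ
  have key : η * (α - β) ^ 2 ≤ (Au + η * Bu) * (η * Av + Bv) := by
    have hc : -(2 * η * (α * β)) ≤ Au * Bv + η ^ 2 * (Bu * Av) := by
      have hp : 0 ≤ Au * Bv := mul_nonneg a1 b2
      have hr : 0 ≤ Bu * Av := mul_nonneg b1 a2
      have hs : (α * β) ^ 2 ≤ (Au * Bv) * (Bu * Av) := by
        calc (α * β) ^ 2 = α ^ 2 * β ^ 2 := by ring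
          _ ≤ (Au * Av) * (Bu * Bv) :=
            mul_le_mul hA hB (sq_nonneg _) (mul_nonneg a1 a2)
          _ = _ := by ring
      refine (neg_le_abs _).trans (abs_le_of_sq_le_sq ?_ (by positivity))
      nlinarith [sq_nonneg (Au * Bv - η ^ 2 * (Bu * Av)), mul_le_mul_of_nonneg_left hs (sq_nonneg η)]
    nlinarith [mul_le_mul_of_nonneg_left hA hη.le, mul_le_mul_of_nonneg_left hB hη.le]
  rw [← eu, ← ev] at key
  have hpos : 0 < (η + 1) ^ 2 := by positivity
  refine le_of_mul_le_mul_left (a := (η + 1) ^ 2) ?_ hpos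
  calc (η + 1) ^ 2 * (η * (x - y) ^ 2) = η * (α - β) ^ 2 := by rw [hα, hβ]; ring
    _ ≤ _ := key
    _ = _ := by ring

/-! ### Calculus along segments -/

section Calculus

variable {n : ℕ} {X : Set (EuclideanSpace ℝ (Fin n))} {f : EuclideanSpace ℝ (Fin n) → ℝ}
  {Hess : EuclideanSpace ℝ (Fin n) → Matrix (Fin n) (Fin n) ℝ}

theorem segment_point_mem (hconv : Convex ℝ X) {x y : EuclideanSpace ℝ (Fin n)} (hx : x ∈ X)
    (hy : y ∈ X) {t : ℝ} (ht : t ∈ Set.Icc (0 : ℝ) 1) : x + t • (y - x) ∈ X :=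
  hconv.add_smul_sub_mem hx hy ht

theorem hasDerivAt_segment (x p : EuclideanSpace ℝ (Fin n)) (t : ℝ) :
    HasDerivAt (fun s : ℝ => x + s • p) p t := by
  simpa using ((hasDerivAt_id t).smul_const p).const_add x

theorem hasDerivAt_gradient_segment
    (hHess : ∀ x, HasFDerivAt (gradient f) (Matrix.toEuclideanCLM (𝕜 := ℝ) (Hess x)) x)
    (x p : EuclideanSpace ℝ (Fin n)) (t : ℝ) :
    HasDerivAt (fun s : ℝ => gradient f (x + s • p)) (mApply (Hess (x + t • p)) p) t :=
  HasFDerivAt.comp_hasDerivAt (l := gradient f) t (hHess (x + t • p)) (hasDerivAt_segment x p t)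

/-- Taylor bound for the gradient under a Lipschitz Hessian. -/
theorem norm_gradient_taylor_le (hconv : Convex ℝ X)
    (hHess : ∀ x, HasFDerivAt (gradient f) (Matrix.toEuclideanCLM (𝕜 := ℝ) (Hess x)) x)
    {L₂ : ℝ} (hLip : ∀ x ∈ X, ∀ y ∈ X, mNorm (Hess x - Hess y) ≤ L₂ * ‖x - y‖)
    {x y : EuclideanSpace ℝ (Fin n)} (hx : x ∈ X) (hy : y ∈ X) :
    ‖gradient f y - gradient f x - mApply (Hess x) (y - x)‖ ≤ L₂ / 2 * ‖y - x‖ ^ 2 := by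
  set p := y - x with hp
  have hd : ∀ t : ℝ, HasDerivAt
      (fun s : ℝ => gradient f (x + s • p) - gradient f x - s • mApply (Hess x) p)
      (mApply (Hess (x + t • p) - Hess x) p) t := by
    intro t
    rw [mApply_sub]
    have h := ((hasDerivAt_gradient_segment hHess x p t).sub_const (gradient f x)).sub
      ((hasDerivAt_id t).smul_const (mApply (Hess x) p))
    rw [one_smul] at h
    exact h
  have h := image_norm_le_of_norm_deriv_right_le_deriv_boundary (a := 0) (b := 1)
    (B := fun t => L₂ / 2 * ‖p‖ ^ 2 * t ^ 2) (B' := fun t => L₂ * ‖p‖ ^ 2 * t)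
    (fun t _ => (hd t).continuousAt.continuousWithinAt)
    (fun t _ => (hd t).hasDerivWithinAt) (by simp)
    (fun t => by
      have := ((hasDerivAt_id t).pow 2).const_mul (L₂ / 2 * ‖p‖ ^ 2)
      refine this.congr_deriv ?_
      simp; ring)
    (fun t ht => by
      have hmem := segment_point_mem hconv hx hy ⟨ht.1, ht.2.le⟩
      have h1 := hLip _ hmem x hx
      calc ‖mApply (Hess (x + t • p) - Hess x) p‖
          ≤ mNorm (Hess (x + t • p) - Hess x) * ‖p‖ := ContinuousLinearMap.le_opNorm _ _
        _ ≤ (L₂ * ‖x + t • p - x‖) * ‖p‖ := by gcongr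
        _ = L₂ * ‖p‖ ^ 2 * t := by
          rw [add_sub_cancel_left, norm_smul, Real.norm_of_nonneg ht.1]; ring)
    (show (1 : ℝ) ∈ Set.Icc (0 : ℝ) 1 by simp)
  simpa [hp] using h

/-- The first-order convexity inequality `f x + ⟪∇f x, y - x⟫ ≤ f y` on a convex set where the
Hessian is positive semidefinite. -/
theorem gradient_inequality (hconv : Convex ℝ X) (hf : Differentiable ℝ f)
    (hHess : ∀ x, HasFDerivAt (gradient f) (Matrix.toEuclideanCLM (𝕜 := ℝ) (Hess x)) x)
    (hnn : ∀ x ∈ X, ∀ v, 0 ≤ qForm (Hess x) v)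
    {x y : EuclideanSpace ℝ (Fin n)} (hx : x ∈ X) (hy : y ∈ X) :
    f x + ⟪gradient f x, y - x⟫ ≤ f y := by
  set p := y - x with hp
  have hd : ∀ t : ℝ, HasDerivAt (fun s : ℝ => f (x + s • p)) ⟪gradient f (x + t • p), p⟫ t := by
    intro t
    have := ((hf (x + t • p)).hasGradientAt.hasFDerivAt).comp_hasDerivAt t
      (hasDerivAt_segment x p t)
    rw [InnerProductSpace.toDual_apply_apply] at this
    exact this
  have hd2 : ∀ t : ℝ, HasDerivAt (fun s : ℝ => ⟪gradient f (x + s • p), p⟫)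
      (qForm (Hess (x + t • p)) p) t := by
    intro t
    have := (hasDerivAt_gradient_segment hHess x p t).inner ℝ (hasDerivAt_const t p)
    simpa [qForm, real_inner_comm] using this
  obtain ⟨c, hc, hc'⟩ := exists_hasDerivAt_eq_slope (fun s : ℝ => f (x + s • p)) _ one_pos
    (fun t _ => (hd t).continuousAt.continuousWithinAt) (fun t _ => hd t)
  obtain ⟨e, he, he'⟩ := exists_hasDerivAt_eq_slope
    (fun s : ℝ => ⟪gradient f (x + s • p), p⟫) _ hc.1
    (fun t _ => (hd2 t).continuousAt.continuousWithinAt) (fun t _ => hd2 t)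
  have h0 := hnn _ (segment_point_mem hconv hx hy ⟨he.1.le, (he.2.trans hc.2).le⟩) p
  rw [he', sub_zero, le_div_iff₀ hc.1] at h0
  simp only [zero_smul, one_smul, add_zero, sub_zero, div_one, zero_mul, sub_nonneg] at h0 hc'
  rw [hc', hp, add_sub_cancel] at h0
  linarith

theorem gradient_inner_nonneg_of_min (hconv : Convex ℝ X) (hf : Differentiable ℝ f)
    {x y : EuclideanSpace ℝ (Fin n)} (hx : x ∈ X) (hy : y ∈ X) (hmin : ∀ z ∈ X, f x ≤ f z) :
    0 ≤ ⟪gradient f x, y - x⟫ := by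
  have h : IsMinOn f X x := fun z hz => hmin z hz
  have := h.localize.hasFDerivWithinAt_nonneg
    ((hf x).hasGradientAt.hasFDerivAt.hasFDerivWithinAt)
    (sub_mem_posTangentConeAt_of_segment_subset (hconv.segment_subset hx hy))
  simpa using this

end Calculus

/-! ### The quadratic model -/

/-- Exact expansion of the quadratic model about an arbitrary point `z`. -/
theorem model_expand {n : ℕ} {H : Matrix (Fin n) (Fin n) ℝ} (hH : H.IsHermitian)
    {c : ℝ} {g x₀ : EuclideanSpace ℝ (Fin n)} {q : EuclideanSpace ℝ (Fin n) → ℝ}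
    (hq : ∀ x, q x = c + ⟪g, x - x₀⟫ + (1 / 2) * qForm H (x - x₀))
    (z p : EuclideanSpace ℝ (Fin n)) :
    q (z + p) = q z + (⟪g, p⟫ + ⟪p, mApply H (z - x₀)⟫) + (1 / 2) * qForm H p := by
  have h1 : z + p - x₀ = (z - x₀) + p := by abel
  have h2 := inner_comm_of_isHermitian hH (z - x₀) p
  rw [hq, hq, h1]
  simp only [qForm, mApply, map_add, inner_add_left, inner_add_right] at h2 ⊢
  rw [h2]; ring

/-- Variational inequality for a minimizer `z` of the quadratic model over a convex set. -/
theorem model_first_order {n : ℕ} {H : Matrix (Fin n) (Fin n) ℝ} (hH : H.IsHermitian)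
    {X : Set (EuclideanSpace ℝ (Fin n))} (hconv : Convex ℝ X)
    {c : ℝ} {g x₀ : EuclideanSpace ℝ (Fin n)} {q : EuclideanSpace ℝ (Fin n) → ℝ}
    (hq : ∀ x, q x = c + ⟪g, x - x₀⟫ + (1 / 2) * qForm H (x - x₀))
    {z w : EuclideanSpace ℝ (Fin n)} (hz : z ∈ X) (hw : w ∈ X) (hmin : ∀ y ∈ X, q z ≤ q y) :
    0 ≤ ⟪g, w - z⟫ + ⟪w - z, mApply H (z - x₀)⟫ := by
  set a := ⟪g, w - z⟫ + ⟪w - z, mApply H (z - x₀)⟫ with ha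
  set b := qForm H (w - z) with hb
  have h : ∀ t ∈ Set.Ioc (0 : ℝ) 1, 0 ≤ a + t / 2 * b := by
    intro t ht
    have h1 := hmin _ (segment_point_mem hconv hz hw ⟨ht.1.le, ht.2⟩)
    rw [model_expand hH hq, qForm_smul_vec, inner_smul_right, inner_smul_left, conj_trivial] at h1
    have h2 : 0 ≤ t * (a + t / 2 * b) := by rw [ha, hb]; linarith
    exact nonneg_of_mul_nonneg_right h2 ht.1
  by_contra! hneg
  -- A negative slope `a` would already be visible at this step length.
  have h1 := h (min 1 (-a / (|b| + 1))) ⟨by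
    have : 0 < -a / (|b| + 1) := div_pos (by linarith) (by positivity)
    exact lt_min one_pos this, min_le_left _ _⟩
  set t := min 1 (-a / (|b| + 1))
  have ht : t ≤ -a / (|b| + 1) := min_le_right _ _
  have ht0 : 0 < t := lt_min one_pos (div_pos (by linarith) (by positivity))
  rw [le_div_iff₀ (by positivity)] at ht
  have := mul_le_mul_of_nonneg_left (le_abs_self b) ht0.le
  nlinarith

/-! ### The inexact step -/

/-- quadratic convergence in distance to the optimum of the inexact PVM
step: under the Hessian accuracy assumption `η_k − 1 ≤ ω‖x_k − x*‖²`, an `ε_k`-optimal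
solution `x̃_{k+1}` of the quadratic model with `ε_k = (lb/‖∇f(x_k)‖)⁴`,
`0 ≤ lb ≤ f(x_k) − f(x*)`, satisfies
`‖x̃_{k+1} − x*‖ ≤ (√η_k/(2μ))(√(8μ)(1 + √(Lω)) + √η_k·L₂)‖x_k − x*‖²`. -/
theorem socgs_inexact_pvm_distance_quadratic {n : ℕ}
    (X : Set (EuclideanSpace ℝ (Fin n)))
    (hne : X.Nonempty) (hcomp : IsCompact X) (hconv : Convex ℝ X)
    (f : EuclideanSpace ℝ (Fin n) → ℝ) (hf : ContDiff ℝ 2 f)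
    (Hess : EuclideanSpace ℝ (Fin n) → Matrix (Fin n) (Fin n) ℝ)
    (hHess : ∀ x, HasFDerivAt (gradient f) (Matrix.toEuclideanCLM (𝕜 := ℝ) (Hess x)) x)
    (μ L : ℝ) (hμ : 0 < μ) (hμL : μ ≤ L)
    (hbound : ∀ x ∈ X, (Hess x - μ • (1 : Matrix (Fin n) (Fin n) ℝ)).PosSemidef ∧
      (L • (1 : Matrix (Fin n) (Fin n) ℝ) - Hess x).PosSemidef)
    (L₂ : ℝ) (hL₂ : 0 < L₂)
    (hLip : ∀ x ∈ X, ∀ y ∈ X, mNorm (Hess x - Hess y) ≤ L₂ * ‖x - y‖)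
    (xstar : EuclideanSpace ℝ (Fin n)) (hxstar : xstar ∈ X)
    (hminstar : ∀ y ∈ X, f xstar ≤ f y)
    (huniq : ∀ z ∈ X, (∀ y ∈ X, f z ≤ f y) → z = xstar)
    (xk : EuclideanSpace ℝ (Fin n)) (hxk : xk ∈ X) (hkne : xk ≠ xstar)
    (Hk : Matrix (Fin n) (Fin n) ℝ) (hHk : Hk.PosDef)
    (ηk : ℝ) (hηk : ηk = max (lamMax (Hk⁻¹ * Hess xk)) (lamMax ((Hess xk)⁻¹ * Hk)))
    (ω : ℝ) (hω : 0 ≤ ω) (hacc : ηk - 1 ≤ ω * ‖xk - xstar‖ ^ 2)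
    (fhat : EuclideanSpace ℝ (Fin n) → ℝ)
    (hfhat : ∀ x, fhat x =
      f xk + ⟪gradient f xk, x - xk⟫ + (1 / 2) * qForm Hk (x - xk))
    (xt : EuclideanSpace ℝ (Fin n)) (hxtX : xt ∈ X)
    (hxtmin : ∀ w ∈ X, fhat xt ≤ fhat w)
    (lb : ℝ) (hlb0 : 0 ≤ lb) (hlb : lb ≤ f xk - f xstar)
    (xtil : EuclideanSpace ℝ (Fin n)) (hxtilX : xtil ∈ X)
    (hxtil : fhat xtil - fhat xt ≤ (lb / ‖gradient f xk‖) ^ 4) :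
    ‖xtil - xstar‖ ≤
      Real.sqrt ηk / (2 * μ) *
        (Real.sqrt (8 * μ) * (1 + Real.sqrt (L * ω)) + Real.sqrt ηk * L₂) *
        ‖xk - xstar‖ ^ 2 := by
  have hfd : Differentiable ℝ f := hf.differentiable (by norm_num)
  set G := Hess xk with hGdef
  have hqlow : ∀ x ∈ X, ∀ v, μ * ‖v‖ ^ 2 ≤ qForm (Hess x) v := by
    intro x hx v
    have h := qForm_nonneg (hbound x hx).1 v
    rw [qForm, mApply_sub, mApply_smul, mApply_one, inner_sub_right, inner_smul_right,
      real_inner_self_eq_norm_sq] at h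
    exact sub_nonneg.1 h
  have hqup : ∀ v, qForm G v ≤ L * ‖v‖ ^ 2 := by
    intro v
    have h := qForm_nonneg (hbound xk hxk).2 v
    rw [qForm, mApply_sub, mApply_smul, mApply_one, inner_sub_right, inner_smul_right,
      real_inner_self_eq_norm_sq] at h
    exact sub_nonneg.1 h
  have hGh : G.IsHermitian := by
    have h := (hbound xk hxk).1.isHermitian.add
      (Matrix.isHermitian_one.smul (show IsSelfAdjoint μ by simp [IsSelfAdjoint]))
    simpa using h
  have hGpd : G.PosDef := by
    have h := Matrix.PosDef.posSemidef_add (hbound xk hxk).1 (Matrix.PosDef.one.smul hμ)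
    simpa using h
  have hHh := hHk.isHermitian
  have hL : 0 < L := hμ.trans_le hμL
  have hGH : ∀ w, qForm G w ≤ ηk * qForm Hk w := fun w =>
    (qForm_le_lamMax hHk hGh w).trans (mul_le_mul_of_nonneg_right
      (hηk ▸ le_max_left _ _) (qForm_nonneg hHk.posSemidef w))
  have hHG : ∀ w, qForm Hk w ≤ ηk * qForm G w := fun w =>
    (qForm_le_lamMax hGpd hHh w).trans (mul_le_mul_of_nonneg_right
      (hηk ▸ le_max_right _ _) (qForm_nonneg hGpd.posSemidef w))
  set p := xk - xstar with hp
  have hp0 : p ≠ 0 := sub_ne_zero.2 hkne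
  have hd : 0 < ‖p‖ := norm_pos_iff.2 hp0
  have hηpos : 0 < ηk := by
    have h1 := qForm_pos hGpd hp0
    have h2 := qForm_pos hHk hp0
    exact pos_of_mul_pos_left (h1.trans_le (hGH p)) h2.le
  have hη1 : 1 ≤ ηk := by
    have h1 := qForm_pos hHk hp0
    have h2 := (hHG p).trans (mul_le_mul_of_nonneg_left (hGH p) hηpos.le)
    rw [← mul_assoc, ← pow_two, le_mul_iff_one_le_left h1] at h2
    exact (one_le_sq_iff₀ hηpos.le).1 h2
  -- Distances are controlled by the norm of the quadratic model.
  have hdist : ∀ v, μ * ‖v‖ ^ 2 ≤ ηk * qForm Hk v := fun v => (hqlow xk hxk v).trans (hGH v)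
  -- The target accuracy is at most `‖p‖ ^ 4`, by convexity of `f`.
  have heps : (lb / ‖gradient f xk‖) ^ 4 ≤ ‖p‖ ^ 4 := by
    have h1 := gradient_inequality hconv hfd hHess
      (fun x hx v => (by positivity : 0 ≤ μ * ‖v‖ ^ 2).trans (hqlow x hx v)) hxk hxstar
    have h2 : -⟪gradient f xk, xstar - xk⟫ ≤ ‖gradient f xk‖ * ‖p‖ := by
      rw [← inner_neg_right, neg_sub]; exact real_inner_le_norm _ _
    have h3 : lb / ‖gradient f xk‖ ≤ ‖p‖ :=
      div_le_of_le_mul₀ (norm_nonneg _) (norm_nonneg _) (by linarith)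
    exact pow_le_pow_left₀ (by positivity) h3 4
  -- The inexact step against the exact minimizer of the model.
  have hA : μ * ‖xtil - xt‖ ^ 2 ≤ ηk * (2 * ‖p‖ ^ 4) := by
    refine (hdist _).trans (mul_le_mul_of_nonneg_left ?_ hηpos.le)
    have h1 := model_first_order hHh hconv hfhat hxtX hxtilX hxtmin
    have h2 := model_expand hHh hfhat xt (xtil - xt)
    rw [add_sub_cancel] at h2
    linarith
  have hA' : ‖xtil - xt‖ ≤ √ηk / √μ * (√2 * ‖p‖ ^ 2) := by
    rw [← Real.sqrt_div hηpos.le]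
    refine abs_le_of_sq_le_sq' ?_ (by positivity) |>.2
    rw [mul_pow, mul_pow, Real.sq_sqrt (by positivity), Real.sq_sqrt (by norm_num),
      div_mul_eq_mul_div, le_div_iff₀ hμ]
    linarith
  -- The exact minimizer of the model against `xstar`.
  set v := xt - xstar with hv
  set s := √(qForm Hk v) with hs
  have hs2 : s ^ 2 = qForm Hk v := Real.sq_sqrt (qForm_nonneg hHk.posSemidef v)
  have hs0 : 0 ≤ s := Real.sqrt_nonneg _
  have hvs : ‖v‖ ≤ √ηk / √μ * s := by
    rw [← Real.sqrt_div hηpos.le]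
    refine abs_le_of_sq_le_sq' ?_ (by positivity) |>.2
    rw [mul_pow, Real.sq_sqrt (by positivity), hs2, div_mul_eq_mul_div, le_div_iff₀ hμ]
    linarith [hdist v]
  have hvar : s ^ 2 ≤ (⟪v, mApply Hk p⟫ - ⟪v, mApply G p⟫)
      - ⟪gradient f xstar - gradient f xk - mApply G (xstar - xk), -v⟫ := by
    have h1 := model_first_order hHh hconv hfhat hxtX hxstar hxtmin
    have h2 := gradient_inner_nonneg_of_min hconv hfd hxstar hxtX hminstar
    have e1 : xstar - xt = -v := by rw [hv, neg_sub]
    have e2 : xt - xk = v - p := by rw [hv, hp]; abel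
    have e3 : xstar - xk = -p := by rw [hp, neg_sub]
    rw [e1, e2] at h1
    rw [← hv] at h2
    rw [hs2, e3]
    have e4 := real_inner_comm v (mApply G p)
    simp only [qForm, mApply, map_sub, map_neg, inner_sub_left, inner_sub_right, inner_neg_left,
      inner_neg_right] at h1 h2 e4 ⊢
    linarith
  have hterm1 : ⟪v, mApply Hk p⟫ - ⟪v, mApply G p⟫ ≤ √(L * ω) * ‖p‖ ^ 2 * s := by
    rw [inner_comm_of_isHermitian hHh, inner_comm_of_isHermitian hGh]
    refine abs_le_of_sq_le_sq' ?_ (by positivity) |>.2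
    have h1 := inner_diff_sq_le hGh hHh hηpos hGH hHG p v
    rw [mul_pow, mul_pow, Real.sq_sqrt (by positivity), hs2]
    refine le_of_mul_le_mul_left (h1.trans ?_) hηpos
    -- `(η - 1)² ≤ η (η - 1) ≤ η ω ‖p‖²`
    have hHv := qForm_nonneg hHk.posSemidef v
    have h2 : (ηk - 1) ^ 2 ≤ ηk * (ω * ‖p‖ ^ 2) := by nlinarith
    calc (ηk - 1) ^ 2 * (qForm G p * qForm Hk v)
        ≤ (ηk * (ω * ‖p‖ ^ 2)) * ((L * ‖p‖ ^ 2) * qForm Hk v) := by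
          refine mul_le_mul h2 (mul_le_mul_of_nonneg_right (hqup p) hHv) ?_ (by positivity)
          exact mul_nonneg (qForm_nonneg hGpd.posSemidef p) hHv
      _ = _ := by ring
  have hterm2 : -⟪gradient f xstar - gradient f xk - mApply G (xstar - xk), -v⟫
      ≤ L₂ / 2 * ‖p‖ ^ 2 * (√ηk / √μ * s) := by
    have h1 := norm_gradient_taylor_le hconv hHess hLip hxk hxstar
    rw [norm_sub_rev xstar xk, ← hp] at h1
    rw [← inner_neg_right, neg_neg]
    exact (real_inner_le_norm _ _).trans (mul_le_mul h1 hvs (norm_nonneg _) (by positivity))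
  have hsle : s ≤ √(L * ω) * ‖p‖ ^ 2 + L₂ / 2 * ‖p‖ ^ 2 * (√ηk / √μ) := by
    by_contra! hlt
    have hspos : 0 < s := lt_of_le_of_lt (by positivity) hlt
    nlinarith [mul_lt_mul_of_pos_right hlt hspos]
  have hB : ‖v‖ ≤ √ηk / √μ * (√(L * ω) * ‖p‖ ^ 2 + L₂ / 2 * ‖p‖ ^ 2 * (√ηk / √μ)) :=
    hvs.trans (mul_le_mul_of_nonneg_left hsle (by positivity))
  have htri : ‖xtil - xstar‖ ≤ ‖xtil - xt‖ + ‖v‖ := norm_sub_le_norm_sub_add_norm_sub _ _ _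
  have hsqrt8 : √(8 * μ) = 2 * √2 * √μ := by
    rw [show (8 : ℝ) * μ = 2 ^ 2 * 2 * μ by ring, Real.sqrt_mul (by norm_num),
      Real.sqrt_mul (by norm_num), Real.sqrt_sq (by norm_num)]
  have h2 : 1 ≤ √2 := Real.one_le_sqrt.2 (by norm_num)
  have hm : 0 < √μ := Real.sqrt_pos.2 hμ
  calc ‖xtil - xstar‖
      ≤ √ηk / √μ * (√2 * ‖p‖ ^ 2) +
        √ηk / √μ * (1 * (√(L * ω) * ‖p‖ ^ 2) + L₂ / 2 * ‖p‖ ^ 2 * (√ηk / √μ)) := by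
        rw [one_mul]; linarith
    _ ≤ √ηk / √μ * (√2 * ‖p‖ ^ 2) +
        √ηk / √μ * (√2 * (√(L * ω) * ‖p‖ ^ 2) + L₂ / 2 * ‖p‖ ^ 2 * (√ηk / √μ)) := by gcongr
    _ = _ := by
        have hden : √ηk / (2 * μ) = √ηk / (2 * √μ ^ 2) := by rw [Real.sq_sqrt hμ.le]
        rw [hsqrt8, hden]
        field_simp
        ring
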